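/- The quotient C[e_1,...,e_n]/J, where J is the span of {∂_α e^β : α ∈ ker ι*, Supp(α) ⊆ Supp(β)} for a unimodular surjection ι* : Z^n → Z^k, is canonically isomorphic as a graded Sym(g)-module to HP_0 of the invariant ring C[z,w]^G: explicitly, the map ψ : C[e_1,...,e_n] → C[z_1,...,z_n,w_1,...,w_n]^G / span of Poisson brackets, sending e_i to the class of z_i w_i, is a surjective Sym(g)-module map with kernel exactly J. -/

import Mathlib

open MvPolynomial

/-- The polynomial ring `ℂ[z₁,…,zₙ,w₁,…,wₙ]`. -/
abbrev ZW (n : ℕ) := MvPolynomial (Fin n ⊕ Fin n) ℂ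

/-- The variable `zᵢ`. -/
noncomputable def z {n : ℕ} (i : Fin n) : ZW n := MvPolynomial.X (Sum.inl i)

/-- The variable `wᵢ`. -/
noncomputable def w {n : ℕ} (i : Fin n) : ZW n := MvPolynomial.X (Sum.inr i)

/-- The standard Poisson bracket on `ℂ[z,w]`. -/
noncomputable def pb {n : ℕ} (p q : ZW n) : ZW n :=
  ∑ i : Fin n,
    (MvPolynomial.pderiv (Sum.inl i) p * MvPolynomial.pderiv (Sum.inr i) q -
      MvPolynomial.pderiv (Sum.inr i) p * MvPolynomial.pderiv (Sum.inl i) q)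

/-- The invariant ring `ℂ[z,w]^G`: the span of the monomials `z^β w^δ` with
`ι*(β − δ) = 0`. -/
noncomputable def InvRing {n k : ℕ} (A : Matrix (Fin k) (Fin n) ℤ) : Submodule ℂ (ZW n) :=
  Submodule.span ℂ {m : ZW n |
    ∃ β δ : Fin n → ℕ, A.mulVec (fun i => (β i : ℤ) - (δ i : ℤ)) = 0 ∧
      m = (∏ j : Fin n, z j ^ β j) * ∏ j : Fin n, w j ^ δ j}

/-- The span of all Poisson brackets of invariants, inside the invariant ring. -/
noncomputable def Brk {n k : ℕ} (A : Matrix (Fin k) (Fin n) ℤ) :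
    Submodule ℂ (InvRing A) :=
  Submodule.span ℂ {x : InvRing A |
    ∃ p ∈ InvRing A, ∃ q ∈ InvRing A, (x : ZW n) = pb p q}

/-!
Grade `ℂ[z,w]` by the full torus, so that `z^β w^δ` has weight `β - δ`. Bracketing with the
invariant `zᵢ wᵢ` multiplies a monomial by the `i`-th entry of its weight up to sign, so modulo
brackets only the monomials `z^γ w^γ`, the images of the `e^γ`, survive: this is surjectivity.
The bracket of two monomials with product `z^γ w^γ` is the image of `∂_α e^γ`, where `α`, the
weight of the first factor, is in the kernel of `A` for invariant monomials; all other brackets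
of monomials have no weight-zero part, so the kernel is contained in `J`. Conversely, `∂_c e^γ`
arises in this way as soon as `|cᵢ| ≤ γᵢ`. Unimodularity reduces every generator `∂_α e^β` of `J`
to this case, because `α` is an integral combination of vectors of `ker A` supported in `Supp α`
with entries `-1`, `0` or `1`: among the bases of columns of `A`, take one meeting `Supp α` in as
many columns as possible; then the fundamental circuits of the columns in `Supp α` are such
vectors.
-/

section Unimodular

open Matrix

variable {m n R : Type*} [Fintype m] [DecidableEq m] [CommRing R]

theorem det_mul_eq_sum_prod_mul_det_submatrix [Fintype n] (A : Matrix m n R) (S : Matrix n m R) :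
    (A * S).det = ∑ g : m → n, (∏ i, S (g i) i) * (A.submatrix id g).det := by
  have hrows : (A * S)ᵀ = fun i => ∑ l, S l i • Aᵀ l := by
    ext i a
    simp only [transpose_apply, mul_apply, Finset.sum_apply, Pi.smul_apply, smul_eq_mul, mul_comm]
  calc (A * S).det = detRowAlternating (fun i => ∑ l, S l i • Aᵀ l) := by
        rw [← det_transpose, hrows]; rfl
    _ = ∑ g : m → n, detRowAlternating (fun i => S (g i) i • Aᵀ (g i)) :=
        detRowAlternating.toMultilinearMap.map_sum fun i l => S l i • Aᵀ l
    _ = ∑ g : m → n, (∏ i, S (g i) i) * (A.submatrix id g).det := by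
        refine Finset.sum_congr rfl fun g _ => ?_
        rw [AlternatingMap.map_smul_univ, smul_eq_mul, ← det_transpose (A.submatrix id g)]
        rfl

theorem exists_det_submatrix_ne_zero_of_mulVec_surjective [Nontrivial R] [Fintype n]
    {A : Matrix m n R} (hA : Function.Surjective A.mulVec) :
    ∃ g : m → n, (A.submatrix id g).det ≠ 0 := by
  obtain ⟨S, hS⟩ := mulVec_surjective_iff_exists_right_inverse.1 hA
  by_contra! hdet
  have h01 : (A * S).det = 0 := by
    simp [det_mul_eq_sum_prod_mul_det_submatrix, hdet]
  simp [hS] at h01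

/-- Unimodularity of the map `A`: all its maximal minors are `-1`, `0` or `1`. The column selection
`g` need not be injective; repeated columns only contribute the minor `0`. -/
def IsUnimodular (A : Matrix m n R) : Prop :=
  ∀ g : m → n, (A.submatrix id g).det ∈ ({-1, 0, 1} : Set R)

/-- For a basis `g` of columns of `A`, the matrix whose `j`-th column is the fundamental circuit
of `j`: the vector of `ker A` expressing column `j` of `A` in that basis. It is zero when `j`
belongs to the basis. -/
noncomputable def fundamentalCircuits [DecidableEq n] (A : Matrix m n R) (g : m → n) :
    Matrix n n R :=
  1 - (1 : Matrix n n R).submatrix id g * ((A.submatrix id g)⁻¹ * A)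

section FundamentalCircuits

variable {A : Matrix m n R} {g : m → n}

theorem injective_of_isUnit_det_submatrix [Nontrivial R] (hg : IsUnit (A.submatrix id g).det) :
    Function.Injective g := by
  intro i i' h
  by_contra hne
  exact hg.ne_zero (det_zero_of_column_eq hne fun a => by simp [h])

variable [DecidableEq n]

theorem mul_fundamentalCircuits [Fintype n] (hg : IsUnit (A.submatrix id g).det) :
    A * fundamentalCircuits A g = 0 := by
  have hsub : A * (1 : Matrix n n R).submatrix id g = A.submatrix id g := by
    simpa using (submatrix_mul A (1 : Matrix n n R) id id g Function.bijective_id).symm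
  rw [fundamentalCircuits, Matrix.mul_sub, Matrix.mul_one, ← Matrix.mul_assoc, hsub,
    mul_nonsing_inv_cancel_left _ _ hg, sub_self]

theorem fundamentalCircuits_mulVec [Fintype n] {α : n → R} (hα : A *ᵥ α = 0) :
    fundamentalCircuits A g *ᵥ α = α := by
  rw [fundamentalCircuits, sub_mulVec, one_mulVec, ← mulVec_mulVec, ← mulVec_mulVec, hα,
    mulVec_zero, mulVec_zero, sub_zero]

theorem fundamentalCircuits_apply_of_notMem_range {l : n} (hl : l ∉ Set.range g) (j : n) :
    fundamentalCircuits A g l j = (1 : Matrix n n R) l j := by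
  have hne : ∀ i, l ≠ g i := fun i h => hl ⟨i, h.symm⟩
  simp [fundamentalCircuits, mul_apply, one_apply, hne]

theorem fundamentalCircuits_apply_basis (hg : Function.Injective g) (i : m) (j : n) :
    fundamentalCircuits A g (g i) j =
      (1 : Matrix n n R) (g i) j - ((A.submatrix id g)⁻¹ * A) i j := by
  simp only [fundamentalCircuits, Matrix.sub_apply, Matrix.mul_apply (M := submatrix _ _ _),
    submatrix_apply, id, one_apply, hg.eq_iff, ite_mul, one_mul, zero_mul, Finset.sum_ite_eq,
    Finset.mem_univ, if_true]

theorem fundamentalCircuits_apply_of_mem_range (hg : IsUnit (A.submatrix id g).det) (l : n) {j : n}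
    (hj : j ∈ Set.range g) : fundamentalCircuits A g l j = 0 := by
  obtain ⟨i, rfl⟩ := hj
  have hcols : (fundamentalCircuits A g).submatrix id g = 0 := by
    rw [fundamentalCircuits, submatrix_sub, Pi.sub_apply, Pi.sub_apply,
      submatrix_mul _ _ _ id _ Function.bijective_id,
      submatrix_mul _ _ _ id _ Function.bijective_id,
      submatrix_id_id, submatrix_id_id, nonsing_inv_mul _ hg, Matrix.mul_one, sub_self]
  exact congrFun₂ hcols l i

theorem det_mul_fundamentalCircuits_apply (hg : IsUnit (A.submatrix id g).det) (i : m) {j : n}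
    (hj : j ∉ Set.range g) :
    (A.submatrix id g).det * fundamentalCircuits A g (g i) j =
      -(A.submatrix id (Function.update g i j)).det := by
  nontriviality R
  have hne : g i ≠ j := fun h => hj ⟨i, h⟩
  have hupdate : (A.submatrix id g).updateCol i (A.col j) =
      A.submatrix id (Function.update g i j) := by
    ext a b
    rcases eq_or_ne b i with rfl | hb
    · simp
    · simp [hb]
  have hcramer := congrFun (det_smul_inv_mulVec_eq_cramer (A.submatrix id g) (A.col j) hg) i
  rw [cramer_apply, hupdate, Pi.smul_apply, smul_eq_mul] at hcramer
  rw [fundamentalCircuits_apply_basis (injective_of_isUnit_det_submatrix hg), one_apply_ne hne,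
    zero_sub, mul_neg, ← hcramer]
  rfl

/-- The exchange argument: leaving the support of `α` would produce a basis that meets it in more
columns. -/
theorem support_fundamentalCircuits_col_subset [DecidableEq R] {α : n → R}
    (hg : IsUnit (A.submatrix id g).det)
    (hmax : ∀ g' : m → n, (A.submatrix id g').det ≠ 0 →
      Finset.card {i | α (g' i) ≠ 0} ≤ Finset.card {i | α (g i) ≠ 0})
    {j : n} (hj : α j ≠ 0) :
    Function.support ((fundamentalCircuits A g).col j) ⊆ Function.support α := by
  intro l hlj
  replace hlj : fundamentalCircuits A g l j ≠ 0 := hlj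
  have hjg : j ∉ Set.range g := fun h => hlj (fundamentalCircuits_apply_of_mem_range hg l h)
  by_cases hl : l ∈ Set.range g
  · obtain ⟨i, rfl⟩ := hl
    intro hi
    have hdet : (A.submatrix id (Function.update g i j)).det ≠ 0 := by
      rw [← neg_ne_zero, ← det_mul_fundamentalCircuits_apply hg i hjg]
      exact fun h => hlj (hg.mul_right_eq_zero.1 h)
    refine (hmax _ hdet).not_gt (Finset.card_lt_card ?_)
    refine (Finset.ssubset_iff_of_subset fun x => ?_).2 ⟨i, by simpa using hj, by simpa using hi⟩
    rcases eq_or_ne x i with rfl | hx <;> simp_all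
  · rw [fundamentalCircuits_apply_of_notMem_range hl] at hlj
    obtain rfl : l = j := by_contra fun h => hlj (one_apply_ne h)
    exact hj

end FundamentalCircuits

namespace IsUnimodular

variable {A : Matrix m n R}

theorem det_submatrix_eq_one_or_neg_one (hA : IsUnimodular A) {g : m → n}
    (hg : (A.submatrix id g).det ≠ 0) :
    (A.submatrix id g).det = 1 ∨ (A.submatrix id g).det = -1 := by
  rcases hA g with h | h | h
  exacts [Or.inr h, absurd h hg, Or.inl h]

theorem isUnit_det_submatrix (hA : IsUnimodular A) {g : m → n} (hg : (A.submatrix id g).det ≠ 0) :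
    IsUnit (A.submatrix id g).det := by
  rcases hA.det_submatrix_eq_one_or_neg_one hg with h | h
  exacts [h ▸ isUnit_one, h ▸ isUnit_one.neg]

theorem fundamentalCircuits_apply_mem [DecidableEq n] (hA : IsUnimodular A) {g : m → n}
    (hg : (A.submatrix id g).det ≠ 0) (l j : n) :
    fundamentalCircuits A g l j ∈ ({-1, 0, 1} : Set R) := by
  have hunit := hA.isUnit_det_submatrix hg
  by_cases hj : j ∈ Set.range g
  · simp [fundamentalCircuits_apply_of_mem_range hunit l hj]
  by_cases hl : l ∈ Set.range g
  · obtain ⟨i, rfl⟩ := hl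
    have hcramer := det_mul_fundamentalCircuits_apply hunit i hj
    have hdet := hA.det_submatrix_eq_one_or_neg_one hg
    have hminor := hA (Function.update g i j)
    simp only [Set.mem_insert_iff, Set.mem_singleton_iff] at hminor ⊢
    grind
  · rw [fundamentalCircuits_apply_of_notMem_range hl, one_apply]
    split_ifs <;> simp

theorem mem_span_of_mulVec_eq_zero [Fintype n] (hA : IsUnimodular A)
    (hsurj : Function.Surjective A.mulVec) {α : n → R} (hα : A *ᵥ α = 0) :
    α ∈ Submodule.span R {c : n → R | A *ᵥ c = 0 ∧ (∀ i, c i ∈ ({-1, 0, 1} : Set R)) ∧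
      ∀ i, c i ≠ 0 → α i ≠ 0} := by
  classical
  nontriviality R
  obtain ⟨g, hg, hmax⟩ := Finset.exists_max_image {g : m → n | (A.submatrix id g).det ≠ 0}
    (fun g => Finset.card {i | α (g i) ≠ 0})
    ((exists_det_submatrix_ne_zero_of_mulVec_surjective hsurj).imp fun g hg => by simpa using hg)
  replace hg : (A.submatrix id g).det ≠ 0 := by simpa using hg
  have hunit := hA.isUnit_det_submatrix hg
  have hsum : α = ∑ j, α j • (fundamentalCircuits A g).col j := by
    conv_lhs => rw [← fundamentalCircuits_mulVec (g := g) hα, mulVec_eq_sum]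
    simp [Matrix.col]
  rw [hsum]
  refine Submodule.sum_mem _ fun j _ => ?_
  rw [← hsum]
  rcases eq_or_ne (α j) 0 with hj | hj
  · simp [hj]
  refine Submodule.smul_mem _ _ (Submodule.subset_span ⟨?_, fun i => ?_, fun i hi => ?_⟩)
  · ext a
    exact congrFun₂ (mul_fundamentalCircuits hunit) a j
  · exact hA.fundamentalCircuits_apply_mem hg i j
  · exact support_fundamentalCircuits_col_subset hunit
      (fun g' hg' => hmax g' (by simpa using hg')) hj hi

end IsUnimodular

end Unimodular

section DirectionalDerivative

variable {σ R : Type*} [Fintype σ]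

theorem prod_univ_X_pow_eq_monomial [CommSemiring R] (s : σ →₀ ℕ) :
    ∏ i, (X i : MvPolynomial σ R) ^ s i = monomial s 1 := by
  rw [monomial_eq, C_1, one_mul, Finsupp.prod_pow]

variable [CommRing R]

/-- The directional derivative `∂_α f = ∑ αᵢ ∂ᵢ f` along an integral vector `α`, as a linear
function of `α`. -/
noncomputable def dirDeriv (f : MvPolynomial σ R) : (σ → ℤ) →ₗ[ℤ] MvPolynomial σ R :=
  Fintype.linearCombination ℤ fun i => pderiv i f

theorem dirDeriv_apply (f : MvPolynomial σ R) (α : σ → ℤ) :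
    dirDeriv f α = ∑ i, (α i : R) • pderiv i f := by
  simp only [dirDeriv, Fintype.linearCombination_apply, Int.cast_smul_eq_zsmul]

end DirectionalDerivative

section TorusWeight

variable {σ : Type*} [DecidableEq σ]

/-- The weights of the full torus `(ℂ*)^σ` on the variables: `zᵢ` has weight `εᵢ` and `wᵢ` has
weight `-εᵢ`, so that the monomial `z^β w^δ` has weight `β - δ`. -/
def torusWeight : σ ⊕ σ → σ → ℤ :=
  Sum.elim (fun i => Pi.single i 1) fun i => -Pi.single i 1

theorem weight_torusWeight_apply (s : σ ⊕ σ →₀ ℕ) (i : σ) :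
    Finsupp.weight torusWeight s i = (s (Sum.inl i) : ℤ) - s (Sum.inr i) := by
  induction s using Finsupp.induction_linear with
  | zero => simp
  | add s t hs ht =>
    simp only [map_add, Pi.add_apply, hs, ht, Finsupp.add_apply]
    push_cast
    ring
  | single j a =>
    rcases j with j | j <;>
      simp [torusWeight, Finsupp.weight_single, Finsupp.single_apply, Pi.single_apply, eq_comm]

theorem weight_torusWeight_eq_zero_iff {s : σ ⊕ σ →₀ ℕ} :
    Finsupp.weight torusWeight s = 0 ↔ ∃ γ : σ →₀ ℕ, s = γ.sumElim γ := by
  constructor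
  · intro hs
    refine ⟨s.comapDomain Sum.inl Sum.inl_injective.injOn, Finsupp.ext ?_⟩
    rintro (i | i)
    · rfl
    · have hi := weight_torusWeight_apply s i
      rw [hs, Pi.zero_apply] at hi
      change s (Sum.inr i) = s (Sum.inl i)
      omega
  · rintro ⟨γ, rfl⟩
    ext i
    simp [weight_torusWeight_apply]

end TorusWeight

section InvariantRing

variable {n k : ℕ} {A : Matrix (Fin k) (Fin n) ℤ}

theorem prod_z_pow_mul_prod_w_pow (β δ : Fin n →₀ ℕ) :
    (∏ i, z i ^ β i) * ∏ i, w i ^ δ i = monomial (β.sumElim δ) 1 := by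
  rw [← prod_univ_X_pow_eq_monomial, Fintype.prod_sum_type]
  rfl

theorem InvRing_eq_span_monomial (A : Matrix (Fin k) (Fin n) ℤ) :
    InvRing A = Submodule.span ℂ ((fun s => monomial s 1) ''
      {s | A.mulVec (Finsupp.weight torusWeight s) = 0}) := by
  have hweight (β δ : Fin n →₀ ℕ) : Finsupp.weight torusWeight (β.sumElim δ) =
      fun i => (β i : ℤ) - δ i := by
    ext i
    simp [weight_torusWeight_apply]
  unfold InvRing
  congr 1
  ext m
  constructor
  · rintro ⟨β, δ, h, rfl⟩
    lift β to Fin n →₀ ℕ using Set.toFinite _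
    lift δ to Fin n →₀ ℕ using Set.toFinite _
    exact ⟨β.sumElim δ, by rwa [Set.mem_ofPred_eq, hweight], (prod_z_pow_mul_prod_w_pow β δ).symm⟩
  · rintro ⟨s, hs, rfl⟩
    obtain ⟨⟨β, δ⟩, rfl⟩ := Finsupp.sumFinsuppEquivProdFinsupp.symm.surjective s
    change Finsupp.sumElim β δ ∈ _ at hs
    rw [Set.mem_ofPred_eq, hweight] at hs
    exact ⟨β, δ, hs, (prod_z_pow_mul_prod_w_pow β δ).symm⟩

theorem monomial_mem_InvRing {s : Fin n ⊕ Fin n →₀ ℕ}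
    (hs : A.mulVec (Finsupp.weight torusWeight s) = 0) : monomial s 1 ∈ InvRing A := by
  rw [InvRing_eq_span_monomial]
  exact Submodule.subset_span ⟨s, hs, rfl⟩

/-- The substitution `eᵢ ↦ zᵢ wᵢ`. -/
noncomputable def diagSubst (n : ℕ) : MvPolynomial (Fin n) ℂ →ₐ[ℂ] ZW n :=
  aeval fun i => z i * w i

theorem diagSubst_X (i : Fin n) : diagSubst n (X i) = z i * w i :=
  aeval_X _ i

theorem diagSubst_monomial (γ : Fin n →₀ ℕ) :
    diagSubst n (monomial γ 1) = monomial (γ.sumElim γ) 1 := by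
  simp_rw [← prod_univ_X_pow_eq_monomial γ, map_prod, map_pow, diagSubst_X, mul_pow,
    Finset.prod_mul_distrib, prod_z_pow_mul_prod_w_pow]

theorem diagSubst_mem_of_forall_monomial {N : Submodule ℂ (ZW n)}
    (hN : ∀ γ : Fin n →₀ ℕ, monomial (γ.sumElim γ) 1 ∈ N) (f : MvPolynomial (Fin n) ℂ) :
    diagSubst n f ∈ N := by
  induction f using MvPolynomial.induction_on' with
  | monomial γ a =>
    rw [← mul_one a, ← smul_eq_mul, ← smul_monomial, map_smul, diagSubst_monomial]
    exact N.smul_mem a (hN γ)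
  | add p q hp hq => exact map_add (diagSubst n) p q ▸ N.add_mem hp hq

theorem diagSubst_mem_InvRing (A : Matrix (Fin k) (Fin n) ℤ) (f : MvPolynomial (Fin n) ℂ) :
    diagSubst n f ∈ InvRing A :=
  diagSubst_mem_of_forall_monomial (fun γ => monomial_mem_InvRing <| by
    rw [weight_torusWeight_eq_zero_iff.2 ⟨γ, rfl⟩, Matrix.mulVec_zero]) f

theorem isWeightedHomogeneous_diagSubst (f : MvPolynomial (Fin n) ℂ) :
    IsWeightedHomogeneous torusWeight (diagSubst n f) 0 :=
  diagSubst_mem_of_forall_monomial (N := weightedHomogeneousSubmodule ℂ torusWeight 0)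
    (fun γ => isWeightedHomogeneous_monomial _ _ _ (weight_torusWeight_eq_zero_iff.2 ⟨γ, rfl⟩)) f

/-- The linear projection `ℂ[z,w] → ℂ[e]` with `z^γ w^γ ↦ e^γ` that kills every monomial of nonzero
torus weight: take the weight-zero component, then set `zᵢ = eᵢ` and `wᵢ = 1`. -/
noncomputable def diagProj (n : ℕ) : ZW n →ₗ[ℂ] MvPolynomial (Fin n) ℂ :=
  (aeval (Sum.elim X fun _ => 1)).toLinearMap ∘ₗ weightedHomogeneousComponent torusWeight 0

theorem diagProj_diagSubst (f : MvPolynomial (Fin n) ℂ) : diagProj n (diagSubst n f) = f := by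
  have hretract : (aeval (Sum.elim X fun _ => 1)).comp (diagSubst n) =
      AlgHom.id ℂ (MvPolynomial (Fin n) ℂ) := by
    ext i
    simp [diagSubst_X, z, w]
  rw [diagProj, LinearMap.comp_apply,
    (isWeightedHomogeneous_diagSubst f).weightedHomogeneousComponent_same]
  exact DFunLike.congr_fun hretract f

theorem diagProj_eq_zero {p : ZW n} {m : Fin n → ℤ} (hp : IsWeightedHomogeneous torusWeight p m)
    (hm : m ≠ 0) : diagProj n p = 0 := by
  rw [diagProj, LinearMap.comp_apply, hp.weightedHomogeneousComponent_ne 0 hm.symm, map_zero]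

end InvariantRing

section PoissonBracket

variable {n : ℕ}

/-- The Poisson bracket as a bilinear map. -/
noncomputable def pbₗ (n : ℕ) : ZW n →ₗ[ℂ] ZW n →ₗ[ℂ] ZW n :=
  ∑ i : Fin n,
    ((LinearMap.mul ℂ (ZW n)).compl₁₂ (pderiv (Sum.inl i)).toLinearMap
        (pderiv (Sum.inr i)).toLinearMap -
      (LinearMap.mul ℂ (ZW n)).compl₁₂ (pderiv (Sum.inr i)).toLinearMap
        (pderiv (Sum.inl i)).toLinearMap)

theorem pbₗ_apply (p q : ZW n) : pbₗ n p q = pb p q := by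
  simp [pbₗ, pb, LinearMap.sum_apply]

theorem isWeightedHomogeneous_pb {p q : ZW n} {a b : Fin n → ℤ}
    (hp : IsWeightedHomogeneous torusWeight p a) (hq : IsWeightedHomogeneous torusWeight q b) :
    IsWeightedHomogeneous torusWeight (pb p q) (a + b) := by
  have hderiv {f : ZW n} {c : Fin n → ℤ} (hf : IsWeightedHomogeneous torusWeight f c)
      (x : Fin n ⊕ Fin n) : IsWeightedHomogeneous torusWeight (pderiv x f) (c - torusWeight x) :=
    hf.pderiv (sub_add_cancel _ _)
  have hpair (i : Fin n) : torusWeight (Sum.inl i) + torusWeight (Sum.inr i) = 0 :=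
    add_neg_cancel (Pi.single i 1 : Fin n → ℤ)
  refine IsWeightedHomogeneous.sum _ _ _ fun i _ => IsWeightedHomogeneous.sub ?_ ?_
  · have hmul := (hderiv hp (Sum.inl i)).mul (hderiv hq (Sum.inr i))
    rwa [sub_add_sub_comm, hpair, sub_zero] at hmul
  · have hmul := (hderiv hp (Sum.inr i)).mul (hderiv hq (Sum.inl i))
    rwa [sub_add_sub_comm, add_comm (torusWeight _), hpair, sub_zero] at hmul

theorem X_mul_pderiv_monomial_eq_cast_smul {σ R : Type*} [CommSemiring R] (i : σ) (s : σ →₀ ℕ)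
    (r : R) : X i * pderiv i (monomial s r) = (s i : R) • monomial s r := by
  rw [X_mul_pderiv_monomial, Nat.cast_smul_eq_nsmul]

/-- With the convention `{zᵢ, wᵢ} = 1` the eigenvalue of `{zᵢ wᵢ, ·}` on `z^β w^δ` is `δᵢ - βᵢ`. -/
theorem pb_z_mul_w_monomial (i : Fin n) (s : Fin n ⊕ Fin n →₀ ℕ) :
    pb (z i * w i) (monomial s 1) =
      -(Finsupp.weight torusWeight s i : ℂ) • monomial s 1 := by
  rw [pb, Finset.sum_eq_single i]
  · simp only [z, w, Derivation.leibniz, pderiv_X_self, smul_eq_mul, mul_one,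
      pderiv_X_of_ne Sum.inl_ne_inr, pderiv_X_of_ne Sum.inr_ne_inl, mul_zero, add_zero, zero_add,
      X_mul_pderiv_monomial_eq_cast_smul, weight_torusWeight_apply, Int.cast_sub, Int.cast_natCast,
      neg_sub, sub_smul]
  · intro j _ hj
    simp [z, w, Derivation.leibniz, pderiv_X, hj.symm]
  · simp

theorem z_mul_w_mul_pb_summand (i : Fin n) (s t : Fin n ⊕ Fin n →₀ ℕ) :
    z i * w i *
        (pderiv (Sum.inl i) (monomial s (1 : ℂ)) * pderiv (Sum.inr i) (monomial t 1) -
          pderiv (Sum.inr i) (monomial s 1) * pderiv (Sum.inl i) (monomial t 1)) =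
      ((s (Sum.inl i) : ℂ) * t (Sum.inr i) - s (Sum.inr i) * t (Sum.inl i)) •
        monomial (s + t) 1 := by
  calc _ = (X (Sum.inl i) * pderiv (Sum.inl i) (monomial s (1 : ℂ))) *
            (X (Sum.inr i) * pderiv (Sum.inr i) (monomial t 1)) -
          (X (Sum.inr i) * pderiv (Sum.inr i) (monomial s 1)) *
            (X (Sum.inl i) * pderiv (Sum.inl i) (monomial t 1)) := by rw [z, w]; ring
    _ = _ := by
        simp only [X_mul_pderiv_monomial_eq_cast_smul, smul_mul_smul_comm, monomial_mul, mul_one,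
          sub_smul]

/-- Comparing both sides after multiplication by `zᵢ wᵢ` keeps truncated exponents out of the
proof. -/
theorem pb_monomial_of_add_eq_sumElim {s t : Fin n ⊕ Fin n →₀ ℕ} {γ : Fin n →₀ ℕ}
    (hst : s + t = γ.sumElim γ) :
    pb (monomial s 1) (monomial t 1) =
      diagSubst n (dirDeriv (monomial γ 1) (Finsupp.weight torusWeight s)) := by
  rw [dirDeriv_apply, map_sum, pb]
  refine Finset.sum_congr rfl fun i _ => ?_
  have hzw : (z i * w i : ZW n) ≠ 0 := mul_ne_zero (X_ne_zero _) (X_ne_zero _)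
  refine mul_left_cancel₀ hzw ?_
  have hz : (s (Sum.inl i) : ℂ) + t (Sum.inl i) = γ i := by
    exact_mod_cast DFunLike.congr_fun hst (Sum.inl i)
  have hw : (s (Sum.inr i) : ℂ) + t (Sum.inr i) = γ i := by
    exact_mod_cast DFunLike.congr_fun hst (Sum.inr i)
  rw [z_mul_w_mul_pb_summand, hst, map_smul, mul_smul_comm, ← diagSubst_X, ← map_mul,
    X_mul_pderiv_monomial_eq_cast_smul, map_smul, diagSubst_monomial, smul_smul,
    weight_torusWeight_apply]
  congr 1
  push_cast
  linear_combination (s (Sum.inl i) : ℂ) * hw - s (Sum.inr i) * hz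

end PoissonBracket

section PoissonHomology

variable {n k : ℕ} {A : Matrix (Fin k) (Fin n) ℤ}

/-- The span `J` of the derivatives `∂_α e^β` with `α ∈ ker A` and `Supp α ⊆ Supp β`. -/
noncomputable def derivSpan (A : Matrix (Fin k) (Fin n) ℤ) :
    Submodule ℂ (MvPolynomial (Fin n) ℂ) :=
  Submodule.span ℂ {f | ∃ (α : Fin n → ℤ) (β : Fin n →₀ ℕ), A.mulVec α = 0 ∧
    (∀ i, α i ≠ 0 → β i ≠ 0) ∧ f = dirDeriv (monomial β 1) α}

theorem derivSpan_eq_span_prod (A : Matrix (Fin k) (Fin n) ℤ) :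
    derivSpan A = Submodule.span ℂ {f | ∃ (α : Fin n → ℤ) (β : Fin n → ℕ), A.mulVec α = 0 ∧
      (∀ i, α i ≠ 0 → β i ≠ 0) ∧ f = ∑ i, (α i : ℂ) • pderiv i (∏ j, X j ^ β j)} := by
  simp only [derivSpan, dirDeriv_apply, ← prod_univ_X_pow_eq_monomial,
    Finsupp.equivFunOnFinite.exists_congr_left, Finsupp.coe_equivFunOnFinite_symm]

theorem diagProj_pb_monomial_mem_derivSpan {s t : Fin n ⊕ Fin n →₀ ℕ}
    (hs : A.mulVec (Finsupp.weight torusWeight s) = 0) :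
    diagProj n (pb (monomial s 1) (monomial t 1)) ∈ derivSpan A := by
  by_cases hst : Finsupp.weight torusWeight (s + t) = 0
  · obtain ⟨γ, hγ⟩ := weight_torusWeight_eq_zero_iff.1 hst
    rw [pb_monomial_of_add_eq_sumElim hγ, diagProj_diagSubst]
    refine Submodule.subset_span ⟨_, γ, hs, fun i hi => ?_, rfl⟩
    have hz : s (Sum.inl i) + t (Sum.inl i) = γ i := DFunLike.congr_fun hγ (Sum.inl i)
    have hw : s (Sum.inr i) + t (Sum.inr i) = γ i := DFunLike.congr_fun hγ (Sum.inr i)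
    rw [weight_torusWeight_apply] at hi
    omega
  · rw [map_add] at hst
    rw [diagProj_eq_zero (isWeightedHomogeneous_pb (isWeightedHomogeneous_monomial _ _ _ rfl)
      (isWeightedHomogeneous_monomial _ _ _ rfl)) hst]
    exact zero_mem _

theorem diagProj_pb_mem_derivSpan {p q : ZW n} (hp : p ∈ InvRing A) (hq : q ∈ InvRing A) :
    diagProj n (pb p q) ∈ derivSpan A := by
  rw [InvRing_eq_span_monomial] at hp hq
  rw [← pbₗ_apply]
  refine LinearMap.BilinMap.apply_apply_mem_of_mem_span ((derivSpan A).comap (diagProj n)) _ _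
    (pbₗ n) ?_ p q hp hq
  rintro _ ⟨s, hs, rfl⟩ _ ⟨t, -, rfl⟩
  rw [pbₗ_apply]
  exact diagProj_pb_monomial_mem_derivSpan hs

/-- The map `ψ` to the zeroth Poisson homology sending `eᵢ` to the class of `zᵢ wᵢ`. -/
noncomputable def toHP0 (A : Matrix (Fin k) (Fin n) ℤ) :
    MvPolynomial (Fin n) ℂ →ₗ[ℂ] InvRing A ⧸ Brk A :=
  (Brk A).mkQ ∘ₗ (diagSubst n).toLinearMap.codRestrict (InvRing A) (diagSubst_mem_InvRing A)

theorem mem_ker_toHP0 {f : MvPolynomial (Fin n) ℂ} :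
    f ∈ LinearMap.ker (toHP0 A) ↔ ⟨diagSubst n f, diagSubst_mem_InvRing A f⟩ ∈ Brk A :=
  LinearMap.mem_ker.trans (Submodule.Quotient.mk_eq_zero _)

theorem monomial_mem_map_Brk {s : Fin n ⊕ Fin n →₀ ℕ}
    (hs : A.mulVec (Finsupp.weight torusWeight s) = 0) (hs0 : Finsupp.weight torusWeight s ≠ 0) :
    monomial s 1 ∈ (Brk A).map (InvRing A).subtype := by
  obtain ⟨i, hi⟩ := Function.ne_iff.1 hs0
  have hmem := monomial_mem_InvRing hs
  have hbracket : -(Finsupp.weight torusWeight s i : ℂ) • (⟨_, hmem⟩ : InvRing A) ∈ Brk A :=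
    Submodule.subset_span ⟨z i * w i, diagSubst_X i ▸ diagSubst_mem_InvRing A (X i), _, hmem,
      (pb_z_mul_w_monomial i s).symm⟩
  have hunit : -(Finsupp.weight torusWeight s i : ℂ) ≠ 0 := neg_ne_zero.2 (Int.cast_ne_zero.2 hi)
  exact ⟨_, (Submodule.smul_mem_iff _ hunit).1 hbracket, rfl⟩

theorem InvRing_le_range_diagSubst_sup_Brk (A : Matrix (Fin k) (Fin n) ℤ) :
    InvRing A ≤ LinearMap.range (diagSubst n).toLinearMap ⊔ (Brk A).map (InvRing A).subtype := by
  refine (InvRing_eq_span_monomial A).le.trans (Submodule.span_le.2 ?_)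
  rintro _ ⟨s, hs, rfl⟩
  by_cases hs0 : Finsupp.weight torusWeight s = 0
  · obtain ⟨γ, rfl⟩ := weight_torusWeight_eq_zero_iff.1 hs0
    exact Submodule.mem_sup_left ⟨monomial γ 1, diagSubst_monomial γ⟩
  · exact Submodule.mem_sup_right (monomial_mem_map_Brk hs hs0)

theorem toHP0_surjective (A : Matrix (Fin k) (Fin n) ℤ) : Function.Surjective (toHP0 A) := by
  intro q
  obtain ⟨x, rfl⟩ := (Brk A).mkQ_surjective q
  obtain ⟨_, ⟨f, rfl⟩, _, ⟨b, hb, rfl⟩, hfb⟩ :=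
    Submodule.mem_sup.1 (InvRing_le_range_diagSubst_sup_Brk A x.2)
  have hdiff : x - ⟨diagSubst n f, diagSubst_mem_InvRing A f⟩ = b :=
    Subtype.ext (sub_eq_iff_eq_add'.2 hfb.symm)
  exact ⟨f, ((Submodule.Quotient.eq (Brk A)).2 (hdiff ▸ hb)).symm⟩

theorem ker_toHP0_le_derivSpan (A : Matrix (Fin k) (Fin n) ℤ) :
    LinearMap.ker (toHP0 A) ≤ derivSpan A := by
  have hBrk : Brk A ≤ (derivSpan A).comap (diagProj n ∘ₗ (InvRing A).subtype) := by
    refine Submodule.span_le.2 ?_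
    rintro x ⟨p, hp, q, hq, hx⟩
    simpa [hx] using diagProj_pb_mem_derivSpan hp hq
  intro f hf
  simpa [diagProj_diagSubst] using hBrk (mem_ker_toHP0.1 hf)

/-- Split `c` into positive and negative part: `∂_c e^γ` is the bracket of `z^{c⁺} w^{c⁻}` with the
complementary monomial `z^{γ - c⁺} w^{γ - c⁻}`. -/
theorem dirDeriv_monomial_mem_ker_toHP0 {c : Fin n → ℤ} {γ : Fin n →₀ ℕ} (hc : A.mulVec c = 0)
    (hcγ : ∀ i, |c i| ≤ γ i) : dirDeriv (monomial γ 1) c ∈ LinearMap.ker (toHP0 A) := by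
  let s : Fin n ⊕ Fin n →₀ ℕ :=
    Finsupp.equivFunOnFinite.symm (Sum.elim (fun i => (c i).toNat) fun i => (-c i).toNat)
  have hs : Finsupp.weight torusWeight s = c := by
    ext i
    rw [weight_torusWeight_apply]
    change ((c i).toNat : ℤ) - (-c i).toNat = c i
    omega
  have hle : s ≤ γ.sumElim γ := by
    rintro (i | i) <;> have hi := abs_le.1 (hcγ i)
    · change (c i).toNat ≤ γ i
      omega
    · change (-c i).toNat ≤ γ i
      omega
  obtain ⟨t, hst⟩ := exists_add_of_le hle
  have ht : Finsupp.weight torusWeight t = -c := by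
    have hweight : Finsupp.weight torusWeight (s + t) = 0 :=
      weight_torusWeight_eq_zero_iff.2 ⟨γ, hst.symm⟩
    rw [map_add, hs] at hweight
    exact eq_neg_of_add_eq_zero_right hweight
  rw [mem_ker_toHP0]
  refine Submodule.subset_span ⟨monomial s 1, monomial_mem_InvRing (by rw [hs, hc]),
    monomial t 1, monomial_mem_InvRing (by rw [ht, Matrix.mulVec_neg, hc, neg_zero]), ?_⟩
  rw [pb_monomial_of_add_eq_sumElim hst.symm, hs]

theorem derivSpan_le_ker_toHP0 (hA : IsUnimodular A) (hsurj : Function.Surjective A.mulVec) :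
    derivSpan A ≤ LinearMap.ker (toHP0 A) := by
  refine Submodule.span_le.2 ?_
  rintro _ ⟨α, β, hα, hαβ, rfl⟩
  have hcircuits : Submodule.span ℤ {c : Fin n → ℤ | A.mulVec c = 0 ∧
      (∀ i, c i ∈ ({-1, 0, 1} : Set ℤ)) ∧ ∀ i, c i ≠ 0 → α i ≠ 0} ≤
      ((LinearMap.ker (toHP0 A)).restrictScalars ℤ).comap (dirDeriv (monomial β 1)) := by
    refine Submodule.span_le.2 ?_
    rintro c ⟨hc, hsign, hsupp⟩
    refine dirDeriv_monomial_mem_ker_toHP0 hc fun i => ?_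
    have hβ : c i ≠ 0 → 1 ≤ β i := fun h => Nat.one_le_iff_ne_zero.2 (hαβ i (hsupp i h))
    rcases hsign i with h | h | h <;> simp_all
  exact hcircuits (hA.mem_span_of_mulVec_eq_zero hsurj hα)

end PoissonHomology

/-- For a unimodular surjection `ι* : ℤⁿ → ℤᵏ` (matrix `A`), with
`J ⊆ ℂ[e₁,…,eₙ]` the span of `{∂_α e^β : α ∈ ker ι*, Supp(α) ⊆ Supp(β)}`, the map
`ψ : ℂ[e₁,…,eₙ] → HP₀ = ℂ[z,w]^G / span{brackets}` sending `eᵢ ↦ [zᵢwᵢ]` (i.e. the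
composition of `f ↦ f(z₁w₁,…,zₙwₙ)`, which lands in the invariant ring, with the
quotient map) is a well-defined surjective linear map with kernel exactly `J`; hence
`ℂ[e₁,…,eₙ]/J ≅ HP₀` canonically as graded `Sym(g)`-modules. -/
theorem stmt17 (n k : ℕ) (A : Matrix (Fin k) (Fin n) ℤ)
    (hsurj : Function.Surjective (A.mulVec : (Fin n → ℤ) → (Fin k → ℤ)))
    (hunim : ∀ g : Fin k → Fin n, (A.submatrix id g).det ∈ ({-1, 0, 1} : Set ℤ)) :
    (∀ f : MvPolynomial (Fin n) ℂ,
        MvPolynomial.aeval (fun i : Fin n => z i * w i) f ∈ InvRing A) ∧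
    ∃ ψ : MvPolynomial (Fin n) ℂ →ₗ[ℂ] ((InvRing A) ⧸ (Brk A)),
      (∀ (f : MvPolynomial (Fin n) ℂ)
          (hf : MvPolynomial.aeval (fun i : Fin n => z i * w i) f ∈ InvRing A),
        ψ f = Submodule.Quotient.mk
          (⟨MvPolynomial.aeval (fun i : Fin n => z i * w i) f, hf⟩ : InvRing A)) ∧
      Function.Surjective ψ ∧
      LinearMap.ker ψ =
        Submodule.span ℂ {f : MvPolynomial (Fin n) ℂ |
          ∃ (α : Fin n → ℤ) (β : Fin n → ℕ), A.mulVec α = 0 ∧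
            (∀ i, α i ≠ 0 → β i ≠ 0) ∧
            f = ∑ i : Fin n, (α i : ℂ) • MvPolynomial.pderiv i
                  (∏ j : Fin n, MvPolynomial.X j ^ β j)} := by
  refine ⟨diagSubst_mem_InvRing A, toHP0 A, fun _ _ => rfl, toHP0_surjective A, ?_⟩
  rw [← derivSpan_eq_span_prod]
  exact (ker_toHP0_le_derivSpan A).antisymm (derivSpan_le_ker_toHP0 hunim hsurj)
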